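/- Let A be a commutative noetherian local ring and let x, y ∈ A be a regular exact pair of zero divisors. Let a ∈ A be weakly regular on the A-module A/(x, y), and let b ∈ A be a non-unit. Then (a) the A-modules G_a and G_{ab} are not isomorphic, and (b) the A-modules H_a and H_{ab} are not isomorphic. -/

import Mathlib

/-!
Formalization of results from "Construction of totally reflexive modules
from an exact pair of zero divisors" by Henrik Holm.
-/

noncomputable section

/-- Non-units `x, y` in `A` form an *exact pair of zero divisors* if
`Ann_A(x) = (y)` and `Ann_A(y) = (x)`. -/
def IsExactZeroDivisorPair {A : Type*} [CommRing A] (x y : A) : Prop :=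
  ¬ IsUnit x ∧ ¬ IsUnit y ∧
    (∀ a : A, a * x = 0 ↔ a ∈ Ideal.span {y}) ∧
    (∀ a : A, a * y = 0 ↔ a ∈ Ideal.span {x})

open Matrix in
/-- The matrix `γ_a = [[x, a], [0, y]]`. -/
def gammaMat {A : Type*} [CommRing A] (x y a : A) : Matrix (Fin 2) (Fin 2) A :=
  !![x, a; 0, y]

open Matrix in
/-- The matrix `η_a = [[y, -a], [0, x]]`. -/
def etaMat {A : Type*} [CommRing A] (x y a : A) : Matrix (Fin 2) (Fin 2) A :=
  !![y, -a; 0, x]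

/-- `G_a`, the cokernel of `γ_a : A² → A²`. -/
abbrev Gmod {A : Type*} [CommRing A] (x y a : A) : Type _ :=
  (Fin 2 → A) ⧸ LinearMap.range (Matrix.toLin' (gammaMat x y a))

/-- `H_a`, the cokernel of `η_a : A² → A²`. -/
abbrev Hmod {A : Type*} [CommRing A] (x y a : A) : Type _ :=
  (Fin 2 → A) ⧸ LinearMap.range (Matrix.toLin' (etaMat x y a))

/-!
The ideal generated by the entries of a presentation matrix with a fixed number of rows is an
invariant of its cokernel: if `T ≤ JF` and `F ⧸ S ≃ F ⧸ T`, then `F ⧸ S` surjects onto `F ⧸ JF`, and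
since a surjective endomorphism of the finite module `F ⧸ JF` is injective, `S ≤ JF`. The entries of
`γ_a` and of `η_a` both generate `(x, y, a)`, so an isomorphism would put `a` into `(x, y, ab)`.
Cancelling `a` modulo `(x, y)` then makes `b` a unit modulo `(x, y)`.
-/

section QuotientSmulTop

variable {A F : Type*} [CommRing A] [AddCommGroup F] [Module A F] [Module.Finite A F]

theorem ker_le_smul_top_of_surjective {J : Ideal A}
    {g : F →ₗ[A] F ⧸ (J • ⊤ : Submodule A F)} (hg : Function.Surjective g) :
    LinearMap.ker g ≤ J • ⊤ := by
  have hJ : J • ⊤ ≤ LinearMap.ker g :=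
    Submodule.smul_le.mpr fun r hr v _ => by
      rw [LinearMap.mem_ker, map_smul]
      exact Module.isTorsionBySet_quotient_ideal_smul F J (a := ⟨r, hr⟩)
  have hinj : Function.Injective ((J • ⊤ : Submodule A F).liftQ g hJ) :=
    OrzechProperty.injective_of_surjective_endomorphism _ <|
      LinearMap.range_eq_top.mp <| by rw [Submodule.range_liftQ, LinearMap.range_eq_top.mpr hg]
  intro v hv
  rw [← Submodule.Quotient.mk_eq_zero]
  exact hinj <| by simpa using hv

theorem le_smul_top_of_quotient_surjective {J : Ideal A} {S T : Submodule A F}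
    {f : F ⧸ S →ₗ[A] F ⧸ T} (hf : Function.Surjective f) (hT : T ≤ J • ⊤) : S ≤ J • ⊤ := by
  let g : F →ₗ[A] F ⧸ (J • ⊤ : Submodule A F) :=
    Submodule.factor hT ∘ₗ f ∘ₗ S.mkQ
  have hg : Function.Surjective g :=
    (Submodule.factor_surjective hT).comp (hf.comp S.mkQ_surjective)
  have hS : S ≤ LinearMap.ker g := fun v hv => by
    simp [g, (Submodule.Quotient.mk_eq_zero S).mpr hv]
  exact hS.trans (ker_le_smul_top_of_surjective hg)

end QuotientSmulTop

section EntryIdeal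

variable {A m n : Type*} [CommSemiring A]

theorem mem_smul_top_pi_iff [Finite m] {J : Ideal A} {v : m → A} :
    v ∈ J • (⊤ : Submodule A (m → A)) ↔ ∀ i, v i ∈ J := by
  classical
  have := Fintype.ofFinite m
  refine ⟨fun hv i => ?_, fun hv => ?_⟩
  · simpa using Submodule.smul_top_le_comap_smul_top J (LinearMap.proj i) hv
  · rw [pi_eq_sum_univ' v]
    exact Submodule.sum_mem _ fun i _ => Submodule.smul_mem_smul (hv i) Submodule.mem_top

/-- The ideal generated by the entries of a matrix. For a matrix with `r` rows it is the Fitting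
ideal `Fitt_{r-1}` of the cokernel. -/
def entryIdeal (M : Matrix m n A) : Ideal A :=
  Ideal.span (Set.range fun p : m × n => M p.1 p.2)

theorem entryIdeal_le_iff {M : Matrix m n A} {J : Ideal A} :
    entryIdeal M ≤ J ↔ ∀ i j, M i j ∈ J := by
  simp [entryIdeal, Ideal.span_le, Set.range_subset_iff]

theorem range_toLin'_le_smul_top_iff [Finite m] [Fintype n] [DecidableEq n]
    {M : Matrix m n A} {J : Ideal A} :
    LinearMap.range (Matrix.toLin' M) ≤ J • ⊤ ↔ entryIdeal M ≤ J := by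
  rw [Matrix.range_toLin', Submodule.span_le, Set.range_subset_iff, entryIdeal_le_iff, forall_comm]
  simp only [SetLike.mem_coe, mem_smul_top_pi_iff, Matrix.col_apply]

theorem entryIdeal_le_of_coker_surjective {A m n n' : Type*} [CommRing A] [Finite m]
    [Fintype n] [DecidableEq n] [Fintype n'] [DecidableEq n'] {M : Matrix m n A} {N : Matrix m n' A}
    (f : (m → A) ⧸ LinearMap.range (Matrix.toLin' M) →ₗ[A]
      (m → A) ⧸ LinearMap.range (Matrix.toLin' N)) (hf : Function.Surjective f) :
    entryIdeal M ≤ entryIdeal N :=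
  range_toLin'_le_smul_top_iff.mp <|
    le_smul_top_of_quotient_surjective hf (range_toLin'_le_smul_top_iff.mpr le_rfl)

end EntryIdeal

section NotIso

variable {A : Type*} [CommRing A]

theorem entryIdeal_gammaMat (x y a : A) :
    entryIdeal (gammaMat x y a) = Ideal.span {x, y} ⊔ Ideal.span {a} :=
  eq_of_forall_ge_iff fun J => by
    simp [entryIdeal_le_iff, Fin.forall_fin_two, gammaMat, Ideal.span_le, Set.insert_subset_iff,
      and_assoc, and_comm, and_left_comm]

theorem entryIdeal_etaMat (x y a : A) :
    entryIdeal (etaMat x y a) = Ideal.span {x, y} ⊔ Ideal.span {a} :=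
  eq_of_forall_ge_iff fun J => by
    simp [entryIdeal_le_iff, Fin.forall_fin_two, etaMat, Ideal.span_le, Set.insert_subset_iff,
      and_assoc, and_comm]

theorem isUnit_mk_of_mem_sup_span_mul {I : Ideal A} {a b : A} (ha : IsSMulRegular (A ⧸ I) a)
    (h : a ∈ I ⊔ Ideal.span {a * b}) : IsUnit (Ideal.Quotient.mk I b) := by
  obtain ⟨t, u, hu, htu⟩ := Ideal.mem_span_singleton_sup.mp (sup_comm I _ ▸ h)
  have hmem : a * (1 - b * t) ∈ I := by
    convert hu using 1
    linear_combination -htu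
  have hmk : Ideal.Quotient.mk I (1 - b * t) = 0 :=
    ha.right_eq_zero_of_smul <| Ideal.Quotient.eq_zero_iff_mem.mpr hmem
  rw [map_sub, map_one, map_mul, sub_eq_zero] at hmk
  exact .of_mul_eq_one _ hmk.symm

theorem not_isUnit_mk_span_pair [IsLocalRing A] {x y b : A} (hx : ¬ IsUnit x) (hy : ¬ IsUnit y)
    (hb : ¬ IsUnit b) : ¬ IsUnit (Ideal.Quotient.mk (Ideal.span {x, y}) b) := by
  have hxy : Ideal.span {x, y} ≤ IsLocalRing.maximalIdeal A :=
    Ideal.span_le.mpr (Set.pair_subset hx hy)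
  have : Nontrivial (A ⧸ Ideal.span {x, y}) :=
    Ideal.Quotient.nontrivial_iff.mpr (ne_top_of_le_ne_top (Ideal.IsPrime.ne_top inferInstance) hxy)
  have := IsLocalHom.of_surjective _ (Ideal.Quotient.mk_surjective (I := Ideal.span {x, y}))
  exact mt (isUnit_of_map_unit _ b) hb

theorem G_not_iso_G_mul_general {x y a b : A}
    (ha : IsSMulRegular (A ⧸ Ideal.span {x, y}) a)
    (hb : ¬ IsUnit (Ideal.Quotient.mk (Ideal.span {x, y}) b)) :
    IsEmpty (Gmod x y a ≃ₗ[A] Gmod x y (a * b)) ∧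
    IsEmpty (Hmod x y a ≃ₗ[A] Hmod x y (a * b)) := by
  have hnot : ¬ Ideal.span {x, y} ⊔ Ideal.span {a} ≤ Ideal.span {x, y} ⊔ Ideal.span {a * b} :=
    fun hle => hb <| isUnit_mk_of_mem_sup_span_mul ha <|
      hle (Ideal.mem_sup_right (Ideal.mem_span_singleton_self a))
  refine ⟨⟨fun e => hnot ?_⟩, ⟨fun e => hnot ?_⟩⟩
  · simpa only [entryIdeal_gammaMat] using
      entryIdeal_le_of_coker_surjective e.toLinearMap e.surjective
  · simpa only [entryIdeal_etaMat] using
      entryIdeal_le_of_coker_surjective e.toLinearMap e.surjective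

end NotIso

/-- **Theorem (5.2).** Let `x, y` be a regular exact pair of zero divisors,
let `a ∈ A` be weakly regular on `A/(x, y)` and let `b ∈ A` be a non-unit.
Then (a) `G_a ≇ G_{ab}` and (b) `H_a ≇ H_{ab}`. -/
theorem G_not_iso_G_mul {A : Type*} [CommRing A] [IsNoetherianRing A]
    [IsLocalRing A] {x y : A} (hxy : IsExactZeroDivisorPair x y)
    (hreg : Ideal.span ({x} : Set A) ⊓ Ideal.span ({y} : Set A) = ⊥) {a b : A}
    (ha : Function.Injective
      fun m : A ⧸ Ideal.span ({x, y} : Set A) => a • m)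
    (hb : ¬ IsUnit b) :
    IsEmpty (Gmod x y a ≃ₗ[A] Gmod x y (a * b)) ∧
    IsEmpty (Hmod x y a ≃ₗ[A] Hmod x y (a * b)) :=
  G_not_iso_G_mul_general ha (not_isUnit_mk_span_pair hxy.1 hxy.2.1 hb)
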